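/- arXiv:math/0209250 — 2 statements merged into one kernel-verified Lean document; each statement's English description precedes it below -/
import Mathlib

section
/- Let a, b be positive real numbers with a/b irrational, and let D = {−n·a : n ∈ ℕ} ∪ {m·b : m ∈ ℕ} ⊆ ℝ (the point-set of the tiling …aaabbb…). Then G_D is a free group of rank 2 (isomorphic to the free group on two generators). -/
open Pointwise

/-- The relators `(x−y)·(y−z)·((x−z))⁻¹`, `x, y, z ∈ D`, as elements of the free group on
the set of difference vectors `D − D`. -/
def pointRelators {E : Type*} [AddGroup E] (D : Set E) : Set (FreeGroup ↥(D - D)) :=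
  {r | ∃ (x y z : E) (hx : x ∈ D) (hy : y ∈ D) (hz : z ∈ D),
    r = FreeGroup.of (⟨x - y, Set.sub_mem_sub hx hy⟩ : ↥(D - D)) *
        FreeGroup.of (⟨y - z, Set.sub_mem_sub hy hz⟩ : ↥(D - D)) *
        (FreeGroup.of (⟨x - z, Set.sub_mem_sub hx hz⟩ : ↥(D - D)))⁻¹}

/-- The group `G_D`, the universal group of the point-set semigroup of `D`: the free group
on `D − D` modulo the normal closure of the relators. -/
abbrev GD {E : Type*} [AddGroup E] (D : Set E) : Type _ :=
  FreeGroup ↥(D - D) ⧸ Subgroup.normalClosure (pointRelators D)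

/-!
Parametrise `D` as the range of `p : κ → E`. A homomorphism from `G_D` to a group `H` is the same
as a map `φ : κ → H`, up to right translation, such that `φ k * (φ l)⁻¹` depends only on the
difference `p k - p l`.

Let `D` be the union of the rays `{n • u i : n ∈ ℕ}` spanned by a `ℤ`-linearly independent family
`u`; the tiling `…aaabbb…` is the case `u = ![-a, b]`. By independence, the difference
`n • u i - m • u j` determines the word `xᵢⁿ xⱼ⁻ᵐ` of the free group, so `n • u i ↦ xᵢⁿ` induces a
homomorphism from `G_D` to the free group. It is inverse to the one sending `xᵢ` to the class
of `u i - 0`, because consecutive points of a ray all differ by `u i`.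
-/

namespace GD

section Universal

variable {κ E H : Type*} [AddGroup E] [Group H] (p : κ → E)

/-- The class in `G_D` of the difference `p k - p l` of two points of `D`, where `D` is given as the
range of a family `p`. -/
def diff (k l : κ) : GD (Set.range p) :=
  QuotientGroup.mk (FreeGroup.of
    ⟨p k - p l, Set.sub_mem_sub (Set.mem_range_self k) (Set.mem_range_self l)⟩)

theorem diff_mul_diff (k l m : κ) : diff p k l * diff p l m = diff p k m :=
  mul_inv_eq_one.mp <| (QuotientGroup.eq_one_iff _).mpr <| Subgroup.subset_normalClosure
    ⟨p k, p l, p m, Set.mem_range_self k, Set.mem_range_self l, Set.mem_range_self m, rfl⟩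

theorem diff_self (k : κ) : diff p k k = 1 :=
  mul_eq_right.mp (diff_mul_diff p k k k)

theorem inv_diff (k l : κ) : (diff p k l)⁻¹ = diff p l k :=
  inv_eq_of_mul_eq_one_right ((diff_mul_diff p k l k).trans (diff_self p k))

variable {p}

theorem diff_congr {k l k' l' : κ} (h : p k - p l = p k' - p l') : diff p k l = diff p k' l' := by
  simp only [diff, h]

theorem diff_eq_one {k l : κ} (h : p k = p l) : diff p k l = 1 :=
  (diff_congr (by rw [h])).trans (diff_self p l)

theorem diff_eq_pow {k : ℕ → κ} (h : ∀ n, p (k (n + 1)) - p (k n) = p (k 1) - p (k 0)) (n : ℕ) :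
    diff p (k n) (k 0) = diff p (k 1) (k 0) ^ n := by
  induction n with
  | zero => rw [diff_self, pow_zero]
  | succ n ih => rw [← diff_mul_diff p (k (n + 1)) (k n), diff_congr (h n), ih, pow_succ']

theorem hom_ext {f g : GD (Set.range p) →* H} (h : ∀ k l, f (diff p k l) = g (diff p k l)) :
    f = g := by
  refine QuotientGroup.monoidHom_ext _ (FreeGroup.ext_hom _ _ ?_)
  rintro ⟨_, _, ⟨k, rfl⟩, _, ⟨l, rfl⟩, rfl⟩
  exact h k l

theorem exists_hom_diff (φ : κ → H)
    (hφ : ∀ k l k' l', p k - p l = p k' - p l' → φ k * (φ l)⁻¹ = φ k' * (φ l')⁻¹) :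
    ∃ f : GD (Set.range p) →* H, ∀ k l, f (diff p k l) = φ k * (φ l)⁻¹ := by
  have exists_sub_eq (d : ↥(Set.range p - Set.range p)) : ∃ k l, p k - p l = d := by
    obtain ⟨_, _, ⟨k, rfl⟩, _, ⟨l, rfl⟩, rfl⟩ := d
    exact ⟨k, l, rfl⟩
  choose head tail sub_eq using exists_sub_eq
  let F : FreeGroup ↥(Set.range p - Set.range p) →* H :=
    FreeGroup.lift fun d => φ (head d) * (φ (tail d))⁻¹
  have F_of (k l : κ) (hd : p k - p l ∈ Set.range p - Set.range p) :
      F (FreeGroup.of ⟨p k - p l, hd⟩) = φ k * (φ l)⁻¹ :=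
    FreeGroup.lift_apply_of.trans (hφ _ _ _ _ (sub_eq _))
  have relators_le : Subgroup.normalClosure (pointRelators (Set.range p)) ≤ F.ker := by
    refine Subgroup.normalClosure_le_normal ?_
    rintro _ ⟨_, _, _, ⟨k, rfl⟩, ⟨l, rfl⟩, ⟨m, rfl⟩, rfl⟩
    simp only [SetLike.mem_coe, MonoidHom.mem_ker, map_mul, map_inv, F_of]
    group
  exact ⟨QuotientGroup.lift _ F relators_le, fun k l => F_of k l _⟩

end Universal

section Rays

variable {ι E : Type*} [AddGroup E]

/-- The points of the rays spanned by a family `u`: the pair `(i, n)` indexes the `n`-th point of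
the `i`-th ray, so the common origin has one index for each `i`. -/
def rayPoint (u : ι → E) (k : ι × ℕ) : E :=
  k.2 • u k.1

/-- The class in `G_D` of the step `u i` of the `i`-th ray; these are the free generators. -/
def rayStep (u : ι → E) (i : ι) : GD (Set.range (rayPoint u)) :=
  diff (rayPoint u) (i, 1) (i, 0)

theorem diff_rayPoint_origin (u : ι → E) (i : ι) (n : ℕ) :
    diff (rayPoint u) (i, n) (i, 0) = rayStep u i ^ n :=
  diff_eq_pow (k := fun n => (i, n)) (fun n => by simp [rayPoint, succ_nsmul']) n

theorem diff_rayPoint (u : ι → E) (k l : ι × ℕ) :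
    diff (rayPoint u) k l = rayStep u k.1 ^ k.2 * (rayStep u l.1 ^ l.2)⁻¹ := by
  have origin_eq : diff (rayPoint u) (k.1, 0) (l.1, 0) = 1 :=
    diff_eq_one (by simp only [rayPoint, zero_nsmul])
  calc
    diff (rayPoint u) k l
      = diff (rayPoint u) k (k.1, 0) * diff (rayPoint u) (k.1, 0) (l.1, 0) *
          diff (rayPoint u) (l.1, 0) l := by simp only [diff_mul_diff]
    _ = diff (rayPoint u) k (k.1, 0) * (diff (rayPoint u) l (l.1, 0))⁻¹ := by
      rw [origin_eq, mul_one, inv_diff]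
    _ = rayStep u k.1 ^ k.2 * (rayStep u l.1 ^ l.2)⁻¹ := by
      rw [← diff_rayPoint_origin, ← diff_rayPoint_origin]

end Rays

end GD

section FormalDifferences

variable {ι H : Type*} [Group H]

theorem pow_eq_pow_of_single_eq (g : ι → H) {i j : ι} {n m : ℕ}
    (h : Finsupp.single i n = Finsupp.single j m) : g i ^ n = g j ^ m := by
  obtain ⟨rfl, rfl⟩ | ⟨rfl, rfl⟩ := Finsupp.single_eq_single_iff .. |>.mp h
  · rfl
  · simp only [pow_zero]

theorem pow_tsub_mul_inv_pow_tsub (x : H) (n m : ℕ) :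
    x ^ (n - m) * (x ^ (m - n))⁻¹ = x ^ n * (x ^ m)⁻¹ := by
  rcases le_total n m with hnm | hmn
  · rw [Nat.sub_eq_zero_of_le hnm, pow_sub x hnm, pow_zero]
    group
  · rw [Nat.sub_eq_zero_of_le hmn, pow_sub x hmn, pow_zero, inv_one, mul_one]

-- Both subtractions of finitely supported functions are truncated: they are the positive and the
-- negative part of the integer-valued difference.
theorem exists_reduced_pow_mul_inv_pow (g : ι → H) (i j : ι) (n m : ℕ) :
    ∃ r s : ℕ, Finsupp.single i r = Finsupp.single i n - Finsupp.single j m ∧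
      Finsupp.single j s = Finsupp.single j m - Finsupp.single i n ∧
      g i ^ r * (g j ^ s)⁻¹ = g i ^ n * (g j ^ m)⁻¹ := by
  classical
  rcases eq_or_ne i j with rfl | hij
  · exact ⟨n - m, m - n, Finsupp.single_tsub .., Finsupp.single_tsub ..,
      pow_tsub_mul_inv_pow_tsub (g i) n m⟩
  · refine ⟨n, m, ?_, ?_, rfl⟩ <;> ext x <;>
      simp only [Finsupp.tsub_apply, Finsupp.single_apply] <;> grind

theorem pow_mul_inv_pow_eq_of_single_add_single_eq (g : ι → H) {i j i' j' : ι} {n m n' m' : ℕ}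
    (h : Finsupp.single i n + Finsupp.single j' m' = Finsupp.single i' n' + Finsupp.single j m) :
    g i ^ n * (g j ^ m)⁻¹ = g i' ^ n' * (g j' ^ m')⁻¹ := by
  obtain ⟨r, s, hr, hs, hrs⟩ := exists_reduced_pow_mul_inv_pow g i j n m
  obtain ⟨r', s', hr', hs', hrs'⟩ := exists_reduced_pow_mul_inv_pow g i' j' n' m'
  have coord (x : ι) := DFunLike.congr_fun h x
  simp only [Finsupp.add_apply] at coord
  have pos_part : Finsupp.single i r = Finsupp.single i' r' := by
    ext x
    grind [coord x, Finsupp.tsub_apply]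
  have neg_part : Finsupp.single j s = Finsupp.single j' s' := by
    ext x
    grind [coord x, Finsupp.tsub_apply]
  rw [← hrs, ← hrs', pow_eq_pow_of_single_eq g pos_part, pow_eq_pow_of_single_eq g neg_part]

end FormalDifferences

section IndependentRays

open GD

variable {ι E : Type*} [AddCommGroup E] {u : ι → E}

theorem single_add_single_eq_of_rayPoint_sub_eq (hu : LinearIndependent ℤ u)
    {k l k' l' : ι × ℕ} (h : rayPoint u k - rayPoint u l = rayPoint u k' - rayPoint u l') :
    Finsupp.single k.1 k.2 + Finsupp.single l'.1 l'.2 =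
      Finsupp.single k'.1 k'.2 + Finsupp.single l.1 l.2 := by
  have hu_nat : LinearIndependent ℕ u := hu.restrict_scalars' ℕ
  apply hu_nat
  simp only [map_add, Finsupp.linearCombination_single]
  exact sub_eq_sub_iff_add_eq_add.mp h

theorem GD_half_ab_free_general (hu : LinearIndependent ℤ u) :
    Nonempty (GD (Set.range (rayPoint u)) ≃* FreeGroup ι) := by
  obtain ⟨toFree, toFree_diff⟩ := exists_hom_diff (p := rayPoint u)
    (fun k => FreeGroup.of k.1 ^ k.2) fun _ _ _ _ h =>
      pow_mul_inv_pow_eq_of_single_add_single_eq _ (single_add_single_eq_of_rayPoint_sub_eq hu h)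
  let ofFree : FreeGroup ι →* GD (Set.range (rayPoint u)) := FreeGroup.lift (rayStep u)
  have ofFree_toFree : ofFree.comp toFree = MonoidHom.id _ :=
    hom_ext fun k l => by simpa [toFree_diff, ofFree] using (diff_rayPoint u k l).symm
  have toFree_ofFree : toFree.comp ofFree = MonoidHom.id _ :=
    FreeGroup.ext_hom _ _ fun i => by simp [toFree_diff, ofFree, rayStep]
  exact ⟨toFree.toMulEquiv ofFree ofFree_toFree toFree_ofFree⟩

end IndependentRays

theorem linearIndependent_int_pair_of_irrational_div {a b : ℝ} (h : Irrational (a / b)) :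
    LinearIndependent ℤ ![a, b] := by
  have hb : b ≠ 0 := by
    rintro rfl
    simp at h
  rw [LinearIndependent.pair_iff]
  intro s t hst
  simp only [zsmul_eq_mul] at hst
  have hs : s = 0 := by
    by_contra hs
    have hs' : (s : ℝ) ≠ 0 := Int.cast_ne_zero.mpr hs
    refine h ⟨-t / s, ?_⟩
    push_cast
    rw [div_eq_div_iff hs' hb]
    linarith
  subst hs
  simpa [hb] using hst

theorem range_rayPoint_neg_pair (a b : ℝ) :
    Set.range (GD.rayPoint ![-a, b]) =
      {x : ℝ | ∃ n : ℕ, x = -(n * a)} ∪ {x : ℝ | ∃ m : ℕ, x = m * b} := by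
  ext x
  simp [GD.rayPoint, Fin.exists_fin_two, eq_comm]

/-- For the point-set of the tiling `…aaabbb…` with `a/b` irrational, the universal group
`G_D` is free of rank 2. -/
theorem GD_half_ab_free {a b : ℝ} (ha : 0 < a) (hb : 0 < b) (hirr : Irrational (a / b)) :
    Nonempty (GD ({x : ℝ | ∃ n : ℕ, x = -(n * a)} ∪ {x : ℝ | ∃ m : ℕ, x = m * b}) ≃*
      FreeGroup (Fin 2)) := by
  have hneg : Irrational (-a / b) := neg_div b a ▸ hirr.neg
  exact range_rayPoint_neg_pair a b ▸
    GD_half_ab_free_general (linearIndependent_int_pair_of_irrational_div hneg)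
end

section
/- Let T : ℤ → Σ be a one-dimensional tiling (bi-infinite word) over the alphabet Σ, and let L(T) be its language, i.e. the set of all words (T(k+1),…,T(k+m)) with k ∈ ℤ and m ≥ 1. Then the universal group U(L(T)) of the connected tiling semigroup of T is isomorphic to the free group on the set of consecutive pairs {(a,b) ∈ Σ × Σ : there exists i ∈ ℤ with T(i) = a and T(i+1) = b}. -/
/-- A factorial language: a set of nonempty words closed under taking nonempty contiguous
factors. -/
def IsFactorial {α : Type*} (L : Set (List α)) : Prop :=
  (∀ w ∈ L, w ≠ []) ∧ ∀ u v w : List α, u ++ v ++ w ∈ L → v ≠ [] → v ∈ L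

/-- The relators `(u)·(v)·((u∘v))⁻¹` over all `u, v ∈ L` for which `u∘v` is defined, i.e.
the last letter of `u` equals the first letter of `v` and `u ++ tail v ∈ L`; then
`u∘v = u ++ tail v`. -/
def langRelators {α : Type*} (L : Set (List α)) : Set (FreeGroup ↥L) :=
  {r | ∃ u v uv : ↥L,
    (u : List α).getLast? = (v : List α).head? ∧
    (uv : List α) = (u : List α) ++ (v : List α).tail ∧
    r = FreeGroup.of u * FreeGroup.of v * (FreeGroup.of uv)⁻¹}

/-- The universal group `U(L)` of a language `L` (the universal group of the connected
tiling semigroup `S(L)`). -/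
abbrev LangGroup {α : Type*} (L : Set (List α)) : Type _ :=
  FreeGroup ↥L ⧸ Subgroup.normalClosure (langRelators L)

/-- The language `L(T)` of a bi-infinite word `T : ℤ → α`: all nonempty words
`(T(k+1),…,T(k+m))` occurring in `T`. -/
def langOf {α : Type*} (T : ℤ → α) : Set (List α) :=
  {w | w ≠ [] ∧ ∃ k : ℤ, ∀ (j : ℕ) (h : j < w.length), w.get ⟨j, h⟩ = T (k + 1 + j)}

/-!
In a factorial language `L`, a word `a₀ a₁ … aₙ` is the product
`a₀a₁ ∘ a₁a₂ ∘ ⋯ ∘ aₙ₋₁aₙ` of its two-letter factors, and a single letter is idempotent, hence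
trivial in `U(L)`; so the two-letter words generate `U(L)`. They generate it freely: sending a
word to the product of its two-letter factors in the free group on the two-letter words respects
every relation `u ∘ v = uv`, because `u` and `v` overlap in exactly one letter.
-/

section ConsecutiveProd

variable {α M : Type*} [Monoid M]

/-- The product `f a₀ a₁ * f a₁ a₂ * ⋯ * f aₙ₋₁ aₙ` over the consecutive pairs of letters of the
word `a₀ a₁ … aₙ`; it is `1` on words with at most one letter. -/
def consecutiveProd (f : α → α → M) (l : List α) : M :=
  (l.zipWith f l.tail).prod

@[simp]
theorem consecutiveProd_nil (f : α → α → M) : consecutiveProd f [] = 1 := rfl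

@[simp]
theorem consecutiveProd_singleton (f : α → α → M) (a : α) : consecutiveProd f [a] = 1 := rfl

@[simp]
theorem consecutiveProd_cons_cons (f : α → α → M) (a b : α) (l : List α) :
    consecutiveProd f (a :: b :: l) = f a b * consecutiveProd f (b :: l) :=
  List.prod_cons

theorem consecutiveProd_append_tail (f : α → α → M) {u v : List α}
    (huv : u.getLast? = v.head?) :
    consecutiveProd f (u ++ v.tail) = consecutiveProd f u * consecutiveProd f v := by
  induction u using List.twoStepInduction with
  | nil =>
    obtain rfl : v = [] := List.head?_eq_none_iff.1 huv.symm
    simp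
  | singleton a =>
    have hv : a :: v.tail = v := List.cons_head?_tail huv.symm
    simp [hv]
  | cons_cons a b l _ ih =>
    have overlap : (b :: l).getLast? = v.head? := by rwa [← List.getLast?_cons_cons]
    rw [consecutiveProd_cons_cons, mul_assoc, ← ih b overlap]
    exact consecutiveProd_cons_cons f a b (l ++ v.tail)

end ConsecutiveProd

namespace LangGroup

variable {α G : Type*} [Group G] {L : Set (List α)}

/-- The generator of the universal group `U(L)` given by a word of `L`. -/
def of (w : L) : LangGroup L :=
  QuotientGroup.mk (FreeGroup.of w)

theorem of_mul_of {u v uv : L} (overlap : (u : List α).getLast? = (v : List α).head?)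
    (huv : (uv : List α) = u ++ (v : List α).tail) : of u * of v = of uv :=
  mul_inv_eq_one.1 <| (QuotientGroup.eq_one_iff _).2 <|
    Subgroup.subset_normalClosure ⟨u, v, uv, overlap, huv, rfl⟩

theorem of_singleton {a : α} (ha : [a] ∈ L) : of ⟨[a], ha⟩ = 1 :=
  mul_eq_left.1 (of_mul_of (u := ⟨[a], ha⟩) (v := ⟨[a], ha⟩) rfl rfl)

variable (f : L → G)
  (hf : ∀ u v uv : L, (u : List α).getLast? = (v : List α).head? →
    (uv : List α) = u ++ (v : List α).tail → f uv = f u * f v)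

/-- The universal property of `U(L)`: a map from `L` to a group that turns the partial product
`∘` into multiplication extends to a homomorphism. -/
def lift : LangGroup L →* G :=
  QuotientGroup.lift _ (FreeGroup.lift f) <| Subgroup.normalClosure_le_normal <| by
    rintro _ ⟨u, v, uv, overlap, huv, rfl⟩
    simp [hf u v uv overlap huv]

@[simp]
theorem lift_of (w : L) : lift f hf (of w) = f w :=
  FreeGroup.lift_apply_of

theorem hom_ext {φ ψ : LangGroup L →* G} (h : ∀ w, φ (of w) = ψ (of w)) : φ = ψ :=
  QuotientGroup.monoidHom_ext _ (FreeGroup.ext_hom _ _ h)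

end LangGroup

section Digrams

variable {α : Type*} (L : Set (List α))

/-- The two-letter words of `L`, as a set of pairs of letters. -/
def digrams : Set (α × α) := {p | [p.1, p.2] ∈ L}

open Classical in
/-- The free generator attached to the two-letter word `ab`, with the junk value `1` when `ab`
does not belong to `L`. -/
noncomputable def digramGen (a b : α) : FreeGroup (digrams L) :=
  if h : (a, b) ∈ digrams L then FreeGroup.of ⟨(a, b), h⟩ else 1

variable {L}

theorem digramGen_of_mem {a b : α} (h : (a, b) ∈ digrams L) :
    digramGen L a b = FreeGroup.of ⟨(a, b), h⟩ :=
  dif_pos h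

variable (L) in
/-- The homomorphism from `U(L)` sending a word to the product of its two-letter factors. -/
noncomputable def LangGroup.toFreeGroup : LangGroup L →* FreeGroup (digrams L) :=
  LangGroup.lift (fun w => consecutiveProd (digramGen L) w) fun _ _ _ overlap huv => by
    rw [huv, consecutiveProd_append_tail _ overlap]

variable (L) in
/-- The homomorphism to `U(L)` sending the free generator of a two-letter word of `L` to the
generator of `U(L)` given by that word. -/
def LangGroup.ofFreeGroup : FreeGroup (digrams L) →* LangGroup L :=
  FreeGroup.lift fun p => LangGroup.of ⟨[p.1.1, p.1.2], p.2⟩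

theorem LangGroup.toFreeGroup_of (w : L) :
    toFreeGroup L (of w) = consecutiveProd (digramGen L) w :=
  lift_of ..

theorem LangGroup.ofFreeGroup_of (p : digrams L) :
    ofFreeGroup L (FreeGroup.of p) = of ⟨[p.1.1, p.1.2], p.2⟩ :=
  FreeGroup.lift_apply_of

theorem LangGroup.toFreeGroup_ofFreeGroup_of (p : digrams L) :
    toFreeGroup L (ofFreeGroup L (FreeGroup.of p)) = FreeGroup.of p := by
  rw [ofFreeGroup_of, toFreeGroup_of, consecutiveProd_cons_cons, consecutiveProd_singleton,
    mul_one, digramGen_of_mem p.2]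

theorem IsFactorial.ofFreeGroup_consecutiveProd (hL : IsFactorial L) (w : List α) (hw : w ∈ L) :
    LangGroup.ofFreeGroup L (consecutiveProd (digramGen L) w) = LangGroup.of ⟨w, hw⟩ := by
  induction w using List.twoStepInduction with
  | nil => exact absurd rfl (hL.1 _ hw)
  | singleton a => rw [consecutiveProd_singleton, map_one, LangGroup.of_singleton]
  | cons_cons a b l _ ih =>
    have hab : [a, b] ∈ L := hL.2 [] [a, b] l hw (List.cons_ne_nil _ _)
    have hbl : b :: l ∈ L := hL.2 [a] (b :: l) [] (by simpa using hw) (List.cons_ne_nil _ _)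
    calc LangGroup.ofFreeGroup L (consecutiveProd (digramGen L) (a :: b :: l))
        = LangGroup.of ⟨[a, b], hab⟩ * LangGroup.of ⟨b :: l, hbl⟩ := by
          rw [consecutiveProd_cons_cons, map_mul, ih b hbl, digramGen_of_mem hab,
            LangGroup.ofFreeGroup_of]
      _ = LangGroup.of ⟨a :: b :: l, hw⟩ := LangGroup.of_mul_of rfl rfl

end Digrams

section Tiling

variable {α : Type*} (T : ℤ → α)

theorem isFactorial_langOf : IsFactorial (langOf T) := by
  refine ⟨fun w hw => hw.1, fun u v w ⟨_, k, hk⟩ hv => ⟨hv, k + u.length, fun j hj => ?_⟩⟩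
  have hlt : u.length + j < (u ++ v ++ w).length := by
    simp only [List.length_append]
    omega
  calc v.get ⟨j, hj⟩
      = (u ++ v ++ w).get ⟨u.length + j, hlt⟩ := by simp [hj]
    _ = T (k + 1 + (u.length + j : ℕ)) := hk _ hlt
    _ = T (k + u.length + 1 + j) := by
      congr 1
      push_cast
      ring

theorem digrams_langOf :
    digrams (langOf T) = {p : α × α | ∃ i : ℤ, T i = p.1 ∧ T (i + 1) = p.2} := by
  ext ⟨a, b⟩
  constructor
  · rintro ⟨-, k, hk⟩
    exact ⟨k + 1, by simpa using (hk 0 (by simp)).symm, by simpa using (hk 1 (by simp)).symm⟩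
  · rintro ⟨i, rfl, rfl⟩
    refine ⟨List.cons_ne_nil _ _, i - 1, fun j hj => ?_⟩
    obtain rfl | rfl : j = 0 ∨ j = 1 := by
      simp only [List.length_cons, List.length_nil] at hj
      omega
    all_goals simp

end Tiling

theorem langGroup_tiling_iso_free_general {α : Type*} {L : Set (List α)} (hL : IsFactorial L) :
    Nonempty (LangGroup L ≃* FreeGroup (digrams L)) := by
  refine ⟨(LangGroup.toFreeGroup L).toMulEquiv (LangGroup.ofFreeGroup L) ?_ ?_⟩
  · refine LangGroup.hom_ext fun w => ?_
    rw [MonoidHom.comp_apply, LangGroup.toFreeGroup_of]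
    exact hL.ofFreeGroup_consecutiveProd w w.2
  · exact FreeGroup.ext_hom _ _ LangGroup.toFreeGroup_ofFreeGroup_of

/-- For a one-dimensional tiling `T`, the universal group of its connected tiling semigroup
is isomorphic to the free group on the set of consecutive pairs of tiles occurring in `T`. -/
theorem langGroup_tiling_iso_free {α : Type*} (T : ℤ → α) :
    Nonempty (LangGroup (langOf T) ≃*
      FreeGroup ↥{p : α × α | ∃ i : ℤ, T i = p.1 ∧ T (i + 1) = p.2}) :=
  digrams_langOf T ▸ langGroup_tiling_iso_free_general (isFactorial_langOf T)
end
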